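/- Let X be a proper CAT(0) space, Γ ⊂ Isom(X) a discrete group, F a Γ-periodic Morse d-flat, Γ₀ = Stab_Γ(∂F), and let C be the closed convex hull of F and all geodesic lines parallel to geodesic lines in F. Then Γ₀ is almost malnormal in Γ: for every g ∈ Γ ∖ Γ₀, the intersection Γ₀ ∩ gΓ₀g⁻¹ is finite. -/

import Mathlib

open Set Metric

/-- `γ` is a unit-speed geodesic on the interval `[a,b]`. -/
def IsGeodesicOn {X : Type*} [MetricSpace X] (γ : ℝ → X) (a b : ℝ) : Prop :=
  ∀ s ∈ Set.Icc a b, ∀ t ∈ Set.Icc a b, dist (γ s) (γ t) = |s - t|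

/-- `γ` is a unit-speed geodesic from `x` to `y`, parametrized on `[0, dist x y]`. -/
def GeodFromTo {X : Type*} [MetricSpace X] (γ : ℝ → X) (x y : X) : Prop :=
  IsGeodesicOn γ 0 (dist x y) ∧ γ 0 = x ∧ γ (dist x y) = y

/-- A CAT(0) space: a geodesic metric space satisfying the CN (Bruhat--Tits)
midpoint inequality. -/
class CAT0 (X : Type*) [MetricSpace X] : Prop where
  geodesic : ∀ x y : X, ∃ γ : ℝ → X, GeodFromTo γ x y
  cn : ∀ x y z m : X, dist y m = dist y z / 2 → dist m z = dist y z / 2 →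
    dist x m ^ 2 ≤ (dist x y ^ 2 + dist x z ^ 2) / 2 - dist y z ^ 2 / 4

/-- A subset is (geodesically) convex if it contains every geodesic between its points. -/
def GeodConvex {X : Type*} [MetricSpace X] (C : Set X) : Prop :=
  ∀ γ : ℝ → X, ∀ a b : ℝ, a ≤ b → IsGeodesicOn γ a b → γ a ∈ C → γ b ∈ C →
    ∀ t ∈ Set.Icc a b, γ t ∈ C

/-- `ℓ` is a (complete, unit-speed) geodesic line. -/
def IsGeodLine {X : Type*} [MetricSpace X] (ℓ : ℝ → X) : Prop :=
  ∀ s t : ℝ, dist (ℓ s) (ℓ t) = |s - t|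

/-- `r` is a unit-speed geodesic ray (parametrized on `[0,∞)`). -/
def IsGeodRay {X : Type*} [MetricSpace X] (r : ℝ → X) : Prop :=
  ∀ s t : ℝ, 0 ≤ s → 0 ≤ t → dist (r s) (r t) = |s - t|

/-- Two rays are asymptotic if they stay at bounded distance. -/
def AsympRay {X : Type*} [MetricSpace X] (r₁ r₂ : ℝ → X) : Prop :=
  ∃ M : ℝ, ∀ t : ℝ, 0 ≤ t → dist (r₁ t) (r₂ t) ≤ M

/-- `ℓ` bounds a (Euclidean) half-plane. -/
def BoundsHalfPlane {X : Type*} [MetricSpace X] (ℓ : ℝ → X) : Prop :=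
  ∃ f : ℝ × ℝ → X,
    (∀ p q : ℝ × ℝ, 0 ≤ p.2 → 0 ≤ q.2 →
      dist (f p) (f q) = Real.sqrt ((p.1 - q.1) ^ 2 + (p.2 - q.2) ^ 2)) ∧
    ∀ t : ℝ, f (t, 0) = ℓ t

/-- A subgroup of the isometry group is discrete (acts metrically properly):
orbit balls are finite. -/
def IsDiscreteSubgroup {X : Type*} [MetricSpace X] (Γ : Subgroup (X ≃ᵢ X)) : Prop :=
  ∀ x : X, ∀ R : ℝ, {g : Γ | dist ((g : X ≃ᵢ X) x) x ≤ R}.Finite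

/-- A subgroup has rank one if it contains an isometry translating a geodesic line
that does not bound a half-plane. -/
def RankOne {X : Type*} [MetricSpace X] (Γ : Subgroup (X ≃ᵢ X)) : Prop :=
  ∃ g ∈ Γ, ∃ ℓ : ℝ → X, IsGeodLine ℓ ∧ ¬ BoundsHalfPlane ℓ ∧
    ∃ τ : ℝ, 0 < τ ∧ ∀ t : ℝ, (g : X ≃ᵢ X) (ℓ t) = ℓ (t + τ)

/-- The orbit counting function of `Γ` at basepoint `o`. -/
noncomputable def orbitCount {X : Type*} [MetricSpace X]
    (Γ : Subgroup (X ≃ᵢ X)) (o : X) (R : ℝ) : ℕ :=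
  Nat.card {g : Γ | dist ((g : X ≃ᵢ X) o) o ≤ R}

/-- The critical exponent of `Γ`:
`δ(Γ) = limsup_{R → ∞} (1/R) log #{g ∈ Γ : dist (g o) o ≤ R}`. -/
noncomputable def critExp {X : Type*} [MetricSpace X]
    (Γ : Subgroup (X ≃ᵢ X)) (o : X) : ℝ :=
  Filter.limsup (fun R : ℝ => Real.log (orbitCount Γ o R) / R) Filter.atTop

/-- `Γ` has finite critical exponent. -/
def HasFiniteCritExp {X : Type*} [MetricSpace X]
    (Γ : Subgroup (X ≃ᵢ X)) (o : X) : Prop :=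
  ∃ a : ℝ, ∀ R : ℝ, 1 ≤ R → Real.log (orbitCount Γ o R) / R ≤ a

/-- The geodesic ray `r` from `o` represents a point of the limit set of `Γ`: it is
the limit of geodesic segments from `o` to orbit points going to infinity. -/
def InLimitSet {X : Type*} [MetricSpace X]
    (Γ : Subgroup (X ≃ᵢ X)) (o : X) (r : ℝ → X) : Prop :=
  IsGeodRay r ∧ r 0 = o ∧
  ∃ g : ℕ → X ≃ᵢ X, (∀ n, g n ∈ Γ) ∧
    Filter.Tendsto (fun n => dist o (g n o)) Filter.atTop Filter.atTop ∧
    ∃ γ : ℕ → ℝ → X, (∀ n, GeodFromTo (γ n) o (g n o)) ∧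
      ∀ t : ℝ, 0 ≤ t →
        Filter.Tendsto (fun n => γ n (min t (dist o (g n o)))) Filter.atTop (nhds (r t))

/-- `Γ` is non-elementary: its limit set contains at least three points (three
pairwise non-asymptotic rays). -/
def NonElementary {X : Type*} [MetricSpace X] (Γ : Subgroup (X ≃ᵢ X)) (o : X) : Prop :=
  ∃ r₁ r₂ r₃ : ℝ → X, InLimitSet Γ o r₁ ∧ InLimitSet Γ o r₂ ∧ InLimitSet Γ o r₃ ∧
    ¬ AsympRay r₁ r₂ ∧ ¬ AsympRay r₁ r₃ ∧ ¬ AsympRay r₂ r₃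

/-- `γ` is an `(A,B)`-quasi-geodesic on `[a,b]`. -/
def IsQuasiGeodesicOn {X : Type*} [MetricSpace X] (A B : ℝ) (γ : ℝ → X) (a b : ℝ) : Prop :=
  ∀ s ∈ Set.Icc a b, ∀ t ∈ Set.Icc a b,
    A⁻¹ * |s - t| - B ≤ dist (γ s) (γ t) ∧ dist (γ s) (γ t) ≤ A * |s - t| + B

/-- A subset `C` is Morse if every quasi-geodesic with endpoints in `C` stays within a
bounded distance of `C`, depending only on the quasi-geodesic constants. -/
def IsMorse {X : Type*} [MetricSpace X] (C : Set X) : Prop :=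
  ∀ A : ℝ, 1 ≤ A → ∀ B : ℝ, 0 ≤ B → ∃ D : ℝ, 0 < D ∧
    ∀ γ : ℝ → X, ∀ a b : ℝ, a ≤ b → IsQuasiGeodesicOn A B γ a b →
      γ a ∈ C → γ b ∈ C → ∀ t ∈ Set.Icc a b, Metric.infDist (γ t) C ≤ D

/-- `F` is a `d`-flat: an isometrically embedded copy of Euclidean `ℝ^d`. -/
def IsFlat {X : Type*} [MetricSpace X] (d : ℕ) (F : Set X) : Prop :=
  ∃ φ : EuclideanSpace ℝ (Fin d) → X, Isometry φ ∧ Set.range φ = F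

/-- `r` is a geodesic ray contained in `F`. -/
def RayIn {X : Type*} [MetricSpace X] (F : Set X) (r : ℝ → X) : Prop :=
  IsGeodRay r ∧ ∀ t : ℝ, 0 ≤ t → r t ∈ F

/-- An isometry `g` stabilizes the boundary sphere `∂F` of `F`: it maps asymptote
classes of rays in `F` to asymptote classes of rays in `F`, and conversely. -/
def StabBoundary {X : Type*} [MetricSpace X] (F : Set X) (g : X ≃ᵢ X) : Prop :=
  (∀ r : ℝ → X, RayIn F r → ∃ r' : ℝ → X, RayIn F r' ∧ AsympRay (fun t => g (r t)) r') ∧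
  (∀ r : ℝ → X, RayIn F r → ∃ r' : ℝ → X, RayIn F r' ∧ AsympRay (fun t => g.symm (r t)) r')

/-!
If `h` stabilizes `∂F`, the distance from a point of `h F` to `F` is convex and bounded along
rays, hence constant, and the Morse property bounds this constant independently of `h`: a
perpendicular from `h F` to `F` followed by a long segment almost parallel to `F` is a
quasi-geodesic with uniform constants.

Suppose now that infinitely many elements of a discrete group stabilize both `∂F` and `g ∂F`. The
orbit of a point under them stays near both flats and is unbounded, and compactness of the sphere
of directions makes every point `y` of `g F` see two points near this orbit under an obtuse angle.
The two sides of this angle form a quasi-geodesic with ends near `F`, so `y` is uniformly close to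
`F`. By symmetry `F` is uniformly close to `g F`. Rays in one flat are therefore asymptotic to rays
in the other, that is, `g ∂F = ∂F`.
-/

section Convexity

lemma nonpos_of_midpoint_le {f : ℝ → ℝ} (hf : ContinuousOn f (Icc 0 1))
    (hmid : ∀ s ∈ Icc (0 : ℝ) 1, ∀ t ∈ Icc (0 : ℝ) 1, f (midpoint ℝ s t) ≤ (f s + f t) / 2)
    (h₀ : f 0 ≤ 0) (h₁ : f 1 ≤ 0) {t : ℝ} (ht : t ∈ Icc (0 : ℝ) 1) : f t ≤ 0 := by
  obtain ⟨m, hm, hmax⟩ := isCompact_Icc.exists_isMaxOn (nonempty_Icc.2 zero_le_one) hf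
  suffices f m ≤ 0 from (hmax ht).trans this
  -- Reflecting the nearer endpoint in the maximum point `m` stays in the interval.
  rcases le_total m (1 / 2) with h | h
  · have hr : 2 * m ∈ Icc (0 : ℝ) 1 := ⟨by linarith [hm.1], by linarith⟩
    have hle := hmid 0 ⟨le_rfl, zero_le_one⟩ _ hr
    rw [midpoint_eq_smul_add, invOf_eq_inv, smul_eq_mul, zero_add,
      inv_mul_cancel_left₀ two_ne_zero] at hle
    linarith [show f (2 * m) ≤ f m from hmax hr]
  · have hr : 2 * m - 1 ∈ Icc (0 : ℝ) 1 := ⟨by linarith, by linarith [hm.2]⟩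
    have hle := hmid _ hr 1 ⟨zero_le_one, le_rfl⟩
    rw [midpoint_eq_smul_add, invOf_eq_inv, smul_eq_mul, sub_add_cancel,
      inv_mul_cancel_left₀ two_ne_zero] at hle
    linarith [show f (2 * m - 1) ≤ f m from hmax hr]

lemma convexOn_of_midpoint_le {V : Type*} [AddCommGroup V] [Module ℝ V] [TopologicalSpace V]
    [ContinuousAdd V] [ContinuousSMul ℝ V] {s : Set V} {f : V → ℝ} (hs : Convex ℝ s)
    (hf : ContinuousOn f s)
    (hmid : ∀ x ∈ s, ∀ y ∈ s, f (midpoint ℝ x y) ≤ (f x + f y) / 2) : ConvexOn ℝ s f := by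
  refine ⟨hs, fun x hx y hy a b ha hb hab => ?_⟩
  set p : ℝ → V := fun t => (1 - t) • x + t • y with hp
  have hps : MapsTo p (Icc 0 1) s := fun t ht =>
    hs hx hy (sub_nonneg.2 ht.2) ht.1 (sub_add_cancel 1 t)
  have hpm : ∀ s t, p (midpoint ℝ s t) = midpoint ℝ (p s) (p t) := fun s t => by
    simp only [hp, midpoint_eq_smul_add, invOf_eq_inv, smul_eq_mul]
    module
  have key := nonpos_of_midpoint_le (f := fun t => f (p t) - ((1 - t) * f x + t * f y))
    ((hf.comp (by fun_prop) hps).sub (by fun_prop)) (fun s hs t ht => ?_) (by simp [hp])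
    (by simp [hp]) (t := b) ⟨hb, by linarith⟩
  · obtain rfl : a = 1 - b := by linarith
    simpa [hp] using key
  · have := hmid _ (hps hs) _ (hps ht)
    rw [hpm, midpoint_eq_smul_add ℝ s t, invOf_eq_inv, smul_eq_mul]
    linarith

lemma eq_of_convexOn_univ_of_bounded_rays {V : Type*} [AddCommGroup V] [Module ℝ V] {f : V → ℝ}
    (hf : ConvexOn ℝ univ f) (hb : ∀ x v : V, ∃ M, ∀ t : ℝ, 0 ≤ t → f (x + t • v) ≤ M) (x y : V) :
    f x = f y := by
  suffices h : ∀ x y, f y ≤ f x from le_antisymm (h y x) (h x y)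
  intro x y
  by_contra! hlt
  obtain ⟨M, hM⟩ := hb x (y - x)
  obtain ⟨t, ht⟩ := exists_gt (max 1 ((M - f x) / (f y - f x)))
  obtain ⟨ht₁, htM⟩ := max_lt_iff.1 ht
  have ht₀ : 0 < t := by linarith
  have hy : (1 - t⁻¹) • x + t⁻¹ • (x + t • (y - x)) = y := by
    rw [smul_add, inv_smul_smul₀ ht₀.ne']
    module
  have hconv := hf.2 (mem_univ x) (mem_univ (x + t • (y - x)))
    (sub_nonneg.2 (inv_le_one_of_one_le₀ ht₁.le)) (inv_nonneg.2 ht₀.le) (sub_add_cancel 1 t⁻¹)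
  rw [hy, smul_eq_mul, smul_eq_mul] at hconv
  have hgrowth : t * (f y - f x) ≤ M - f x := by
    have := mul_le_mul_of_nonneg_left hconv ht₀.le
    rw [mul_add, ← mul_assoc, ← mul_assoc, mul_sub, mul_inv_cancel₀ ht₀.ne'] at this
    linarith [hM t ht₀.le]
  rw [div_lt_iff₀ (by linarith)] at htM
  linarith

end Convexity

section ScaledDistance

variable {X : Type*} [MetricSpace X]

/-- `m` is a metric midpoint of `x` and `y`: the form in which geodesics enter the CN inequality. -/
structure IsMetricMidpoint (x y m : X) : Prop where
  left : dist x m = dist x y / 2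
  right : dist m y = dist x y / 2

lemma IsMetricMidpoint.symm {x y m : X} (h : IsMetricMidpoint x y m) : IsMetricMidpoint y x m :=
  ⟨by rw [dist_comm, h.right, dist_comm], by rw [dist_comm, h.left, dist_comm]⟩

/-- `σ` multiplies distances on `s` by the constant `c ≥ 0`, possibly zero. This covers
constant-speed geodesics (`s` an interval) as well as flats (`c = 1`). -/
def ScalesDistOn {V : Type*} [PseudoMetricSpace V] (c : ℝ) (σ : V → X) (s : Set V) : Prop :=
  ∀ x ∈ s, ∀ y ∈ s, dist (σ x) (σ y) = c * dist x y

lemma ScalesDistOn.continuousOn {V : Type*} [PseudoMetricSpace V] {c : ℝ} {σ : V → X} {s : Set V}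
    (hσ : ScalesDistOn c σ s) : ContinuousOn σ s :=
  (LipschitzOnWith.of_dist_le' fun x hx y hy => (hσ x hx y hy).le).continuousOn

lemma scalesDistOn_of_isometry {V : Type*} [PseudoMetricSpace V] {φ : V → X} (hφ : Isometry φ)
    (s : Set V) : ScalesDistOn 1 φ s :=
  fun x _ y _ => by rw [hφ.dist_eq, one_mul]

lemma IsGeodesicOn.scalesDistOn {γ : ℝ → X} {a b : ℝ} (hγ : IsGeodesicOn γ a b) :
    ScalesDistOn 1 γ (Icc a b) :=
  fun s hs t ht => by rw [hγ s hs t ht, Real.dist_eq, one_mul]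

variable {V : Type*} [SeminormedAddCommGroup V] [NormedSpace ℝ V]

lemma ScalesDistOn.isMetricMidpoint {c : ℝ} {σ : V → X} {s : Set V} (hσ : ScalesDistOn c σ s)
    (hs : Convex ℝ s) {x y : V} (hx : x ∈ s) (hy : y ∈ s) :
    IsMetricMidpoint (σ x) (σ y) (σ (midpoint ℝ x y)) := by
  have hm : midpoint ℝ x y ∈ s := hs.midpoint_mem hx hy
  constructor
  · rw [hσ _ hx _ hm, hσ _ hx _ hy, dist_left_midpoint, Real.norm_two]
    ring
  · rw [hσ _ hm _ hy, hσ _ hx _ hy, dist_midpoint_right, Real.norm_two]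
    ring

lemma scalesDistOn_line {φ : V → X} (hφ : Isometry φ) (x v : V) (s : Set ℝ) :
    ScalesDistOn ‖v‖ (fun t : ℝ => φ (x + t • v)) s := fun t _ t' _ => by
  rw [hφ.dist_eq, dist_eq_norm, add_sub_add_left_eq_sub, ← sub_smul, norm_smul, mul_comm,
    Real.norm_eq_abs, Real.dist_eq]

end ScaledDistance

namespace CAT0

variable {X : Type*} [MetricSpace X] [CAT0 X]

lemma exists_isMetricMidpoint (x y : X) : ∃ m, IsMetricMidpoint x y m := by
  obtain ⟨γ, hγ, hγ₀, hγ₁⟩ := CAT0.geodesic x y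
  have hm := hγ.scalesDistOn.isMetricMidpoint (convex_Icc _ _)
    (left_mem_Icc.2 dist_nonneg) (right_mem_Icc.2 dist_nonneg)
  rw [hγ₀, hγ₁] at hm
  exact ⟨_, hm⟩

lemma dist_midpoint_midpoint_le_of_common {x y z m n : X} (hm : IsMetricMidpoint x y m)
    (hn : IsMetricMidpoint x z n) : dist m n ≤ dist y z / 2 := by
  have hmn := CAT0.cn m x z n hn.left hn.right
  have hzm := CAT0.cn z x y m hm.left hm.right
  rw [dist_comm m x, hm.left, dist_comm m z] at hmn
  rw [dist_comm z x, dist_comm z y] at hzm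
  refine abs_le_of_sq_le_sq' (b := dist y z / 2) ?_ (by positivity) |>.2
  linarith

lemma dist_midpoint_midpoint_le {x y x' y' m m' : X} (hm : IsMetricMidpoint x y m)
    (hm' : IsMetricMidpoint x' y' m') : dist m m' ≤ (dist x x' + dist y y') / 2 := by
  obtain ⟨n, hn⟩ := exists_isMetricMidpoint x y'
  linarith [dist_triangle m n m', dist_midpoint_midpoint_le_of_common hm hn,
    dist_midpoint_midpoint_le_of_common hn.symm hm'.symm]

variable {V : Type*} [SeminormedAddCommGroup V] [NormedSpace ℝ V] {s : Set V}

lemma convexOn_dist {σ τ : V → X} {c c' : ℝ} (hs : Convex ℝ s) (hσ : ScalesDistOn c σ s)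
    (hτ : ScalesDistOn c' τ s) : ConvexOn ℝ s fun x => dist (σ x) (τ x) :=
  convexOn_of_midpoint_le hs
    (continuous_dist.comp_continuousOn (hσ.continuousOn.prodMk hτ.continuousOn)) fun _ hx _ hy =>
    dist_midpoint_midpoint_le (hσ.isMetricMidpoint hs hx hy) (hτ.isMetricMidpoint hs hx hy)

lemma convexOn_infDist {σ : V → X} {c : ℝ} {C : Set X} (hs : Convex ℝ s)
    (hσ : ScalesDistOn c σ s) (hC : C.Nonempty)
    (hmid : ∀ p ∈ C, ∀ q ∈ C, ∃ m ∈ C, IsMetricMidpoint p q m) :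
    ConvexOn ℝ s fun x => infDist (σ x) C := by
  refine convexOn_of_midpoint_le hs ((continuous_infDist_pt C).comp_continuousOn hσ.continuousOn)
    fun x hx y hy => le_of_forall_pos_le_add fun ε hε => ?_
  obtain ⟨p, hp, hxp⟩ := (infDist_lt_iff hC).1 (lt_add_of_pos_right (infDist (σ x) C) hε)
  obtain ⟨q, hq, hyq⟩ := (infDist_lt_iff hC).1 (lt_add_of_pos_right (infDist (σ y) C) hε)
  obtain ⟨m, hm, hpqm⟩ := hmid p hp q hq
  linarith [infDist_le_dist_of_mem (x := σ (midpoint ℝ x y)) hm,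
    dist_midpoint_midpoint_le (hσ.isMetricMidpoint hs hx hy) hpqm]

lemma mul_dist_le_mul_dist {σ τ : ℝ → X} {c c' l t : ℝ} (hσ : ScalesDistOn c σ (Icc 0 l))
    (hτ : ScalesDistOn c' τ (Icc 0 l)) (h₀ : σ 0 = τ 0) (ht : t ∈ Icc 0 l) :
    l * dist (σ t) (τ t) ≤ t * dist (σ l) (τ l) := by
  rcases ht.1.eq_or_lt with rfl | ht₀
  · simp [h₀]
  have hl : 0 < l := ht₀.trans_le ht.2
  have hconv := (convexOn_dist (convex_Icc 0 l) hσ hτ).2 (left_mem_Icc.2 hl.le)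
    (right_mem_Icc.2 hl.le) (sub_nonneg.2 ((div_le_one hl).2 ht.2)) (div_nonneg ht₀.le hl.le)
    (sub_add_cancel 1 (t / l))
  simp only [h₀, dist_self, smul_eq_mul, mul_zero, zero_add, div_mul_cancel₀ _ hl.ne'] at hconv
  calc l * dist (σ t) (τ t) ≤ l * (t / l * dist (σ l) (τ l)) := by gcongr
    _ = t * dist (σ l) (τ l) := by field_simp

end CAT0

section Flats

variable {X : Type*} [MetricSpace X] {E : Type*} [NormedAddCommGroup E] [NormedSpace ℝ E]

lemma exists_isMetricMidpoint_mem_range {φ : E → X} (hφ : Isometry φ) :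
    ∀ p ∈ range φ, ∀ q ∈ range φ, ∃ m ∈ range φ, IsMetricMidpoint p q m := by
  rintro _ ⟨x, rfl⟩ _ ⟨y, rfl⟩
  exact ⟨_, mem_range_self (midpoint ℝ x y), (scalesDistOn_of_isometry hφ univ).isMetricMidpoint
    convex_univ (mem_univ x) (mem_univ y)⟩

lemma rayIn_range_of_norm_eq_one {φ : E → X} (hφ : Isometry φ) (x : E) {v : E} (hv : ‖v‖ = 1) :
    RayIn (range φ) fun t : ℝ => φ (x + t • v) := by
  refine ⟨fun s t _ _ => ?_, fun t _ => mem_range_self _⟩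
  rw [scalesDistOn_line hφ x v univ s (mem_univ s) t (mem_univ t), hv, one_mul, Real.dist_eq]

lemma norm_eq_one_of_dist_line_le {φ : E → X} (hφ : Isometry φ) {r : ℝ → X} (hr : IsGeodRay r)
    {x v : E} {K : ℝ} (h : ∀ t : ℝ, 0 ≤ t → dist (r t) (φ (x + t • v)) ≤ K) : ‖v‖ = 1 := by
  have hbound : ∀ t : ℝ, 0 < t → t * |‖v‖ - 1| ≤ 2 * K := fun t ht => by
    have hline : dist (φ (x + t • v)) (φ (x + (0 : ℝ) • v)) = t * ‖v‖ := by
      rw [scalesDistOn_line hφ x v univ t (mem_univ t) 0 (mem_univ 0), dist_zero_right,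
        Real.norm_of_nonneg ht.le, mul_comm]
    have hray : dist (r t) (r 0) = t := by rw [hr t 0 ht.le le_rfl, sub_zero, abs_of_pos ht]
    calc t * |‖v‖ - 1| = |dist (φ (x + t • v)) (φ (x + (0 : ℝ) • v)) - dist (r t) (r 0)| := by
          rw [hline, hray, ← mul_sub_one, abs_mul, abs_of_pos ht]
      _ ≤ dist (φ (x + t • v)) (r t) + dist (φ (x + (0 : ℝ) • v)) (r 0) := dist_dist_dist_le _ _ _ _
      _ ≤ 2 * K := by
          rw [dist_comm _ (r t), dist_comm _ (r 0)]
          linarith [h t ht.le, h 0 le_rfl]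
  by_contra hv
  have hpos : 0 < |‖v‖ - 1| := abs_pos.2 (sub_ne_zero.2 hv)
  obtain ⟨t, ht⟩ := exists_gt (max 0 (2 * K / |‖v‖ - 1|))
  obtain ⟨ht₀, htK⟩ := max_lt_iff.1 ht
  rw [div_lt_iff₀ hpos] at htK
  linarith [hbound t ht₀]

variable [CAT0 X]

lemma dist_line_le_of_dist_endpoints_le {φ : E → X} (hφ : Isometry φ) {r : ℝ → X} {T K : ℝ}
    (hr : IsGeodesicOn r 0 T) (hT : 0 < T) {x y : E} (h₀ : dist (r 0) (φ x) ≤ K)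
    (hy : dist (r T) (φ y) ≤ K) {t : ℝ} (ht : t ∈ Icc 0 T) :
    dist (r t) (φ (x + t • T⁻¹ • (y - x))) ≤ K := by
  refine ((CAT0.convexOn_dist (convex_Icc 0 T) hr.scalesDistOn (scalesDistOn_line hφ x
    (T⁻¹ • (y - x)) (Icc 0 T))).le_max_of_mem_Icc (left_mem_Icc.2 hT.le) (right_mem_Icc.2 hT.le)
    ht).trans (max_le ?_ ?_)
  · simpa only [zero_smul, add_zero] using h₀
  · simpa only [smul_inv_smul₀ hT.ne', add_sub_cancel] using hy

lemma exists_dist_line_le [CompleteSpace E] {φ : E → X} (hφ : Isometry φ) {r : ℝ → X}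
    (hr : IsGeodRay r) {K : ℝ} (hK : ∀ t, 0 ≤ t → infDist (r t) (range φ) < K) :
    ∃ x v : E, ∀ t : ℝ, 0 ≤ t → dist (r t) (φ (x + t • v)) ≤ K := by
  have hz : ∀ t : ℝ, ∃ z, 0 ≤ t → dist (r t) (φ z) < K := fun t => by
    by_cases ht : 0 ≤ t
    · obtain ⟨_, ⟨z, rfl⟩, hz⟩ := (infDist_lt_iff (range_nonempty φ)).1 (hK t ht)
      exact ⟨z, fun _ => hz⟩
    · exact ⟨0, fun h => absurd h ht⟩
  choose z hz using hz
  set e : ℕ → E := fun n => ((n : ℝ) + 1)⁻¹ • (z (n + 1) - z 0)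
  have hseg : ∀ (n : ℕ) (t : ℝ), t ∈ Icc 0 ((n : ℝ) + 1) →
      dist (r t) (φ (z 0 + t • e n)) ≤ K := fun n t ht =>
    dist_line_le_of_dist_endpoints_le hφ (fun s hs t ht => hr s t hs.1 ht.1)
      n.cast_add_one_pos (hz 0 le_rfl).le (hz _ n.cast_add_one_pos.le).le ht
  have hcauchy : CauchySeq e := by
    refine cauchySeq_of_le_tendsto_0 (fun N : ℕ => 2 * K * (1 / ((N : ℝ) + 1)))
      (fun m n N hm hn => ?_)
      (by simpa using (tendsto_one_div_add_atTop_nhds_zero_nat (𝕜 := ℝ)).const_mul (2 * K))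
    have hN : (0 : ℝ) < (N : ℝ) + 1 := N.cast_add_one_pos
    have hdist : ((N : ℝ) + 1) * dist (e m) (e n) ≤ 2 * K := by
      rw [← Real.norm_of_nonneg hN.le, ← dist_smul₀, ← dist_add_left (z 0), ← hφ.dist_eq]
      linarith [dist_triangle_left (φ (z 0 + ((N : ℝ) + 1) • e m))
        (φ (z 0 + ((N : ℝ) + 1) • e n)) (r ((N : ℝ) + 1)),
        hseg m (N + 1) ⟨hN.le, by gcongr⟩, hseg n (N + 1) ⟨hN.le, by gcongr⟩]
    rw [mul_one_div, le_div_iff₀ hN]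
    linarith
  obtain ⟨v, hv⟩ := cauchySeq_tendsto_of_complete hcauchy
  refine ⟨z 0, v, fun t ht => ?_⟩
  have hlim : Filter.Tendsto (fun n => dist (r t) (φ (z 0 + t • e n))) Filter.atTop
      (nhds (dist (r t) (φ (z 0 + t • v)))) :=
    tendsto_const_nhds.dist ((hφ.continuous.tendsto _).comp ((hv.const_smul t).const_add (z 0)))
  refine le_of_tendsto hlim ?_
  filter_upwards [Filter.eventually_ge_atTop ⌈t⌉₊] with n hn
  exact hseg n t ⟨ht, by linarith [Nat.ceil_le.1 hn]⟩

lemma exists_rayIn_asympRay_of_infDist_le [CompleteSpace E] {φ : E → X} (hφ : Isometry φ)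
    {r : ℝ → X} (hr : IsGeodRay r) {K : ℝ} (hK : ∀ t, 0 ≤ t → infDist (r t) (range φ) ≤ K) :
    ∃ r', RayIn (range φ) r' ∧ AsympRay r r' := by
  obtain ⟨x, v, hv⟩ := exists_dist_line_le hφ hr fun t ht =>
    (hK t ht).trans_lt (lt_add_one K)
  exact ⟨_, rayIn_range_of_norm_eq_one hφ x (norm_eq_one_of_dist_line_le hφ hr hv), K + 1, hv⟩

end Flats

section Morse

variable {X : Type*} [MetricSpace X] {F : Set X}

lemma IsQuasiGeodesicOn.of_dist_le {γ γ' : ℝ → X} {A B K a b : ℝ}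
    (hγ : IsQuasiGeodesicOn A B γ a b) (h : ∀ t ∈ Icc a b, dist (γ t) (γ' t) ≤ K) :
    IsQuasiGeodesicOn A (B + 2 * K) γ' a b := fun s hs t ht => by
  obtain ⟨hlow, hup⟩ := hγ s hs t ht
  have := abs_le.1 ((dist_dist_dist_le (γ s) (γ t) (γ' s) (γ' t)).trans
    (add_le_add (h s hs) (h t ht)))
  constructor <;> linarith [this.1, this.2]

lemma IsMorse.exists_infDist_le_of_mem_thickening (hF : IsMorse F) {A B K : ℝ} (hA : 1 ≤ A)
    (hB : 0 ≤ B) (hK : 0 ≤ K) :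
    ∃ D, ∀ (γ : ℝ → X) (a b : ℝ), a ≤ b → IsQuasiGeodesicOn A B γ a b → γ a ∈ thickening K F →
      γ b ∈ thickening K F → ∀ t ∈ Icc a b, infDist (γ t) F ≤ D := by
  obtain ⟨D, -, hD⟩ := hF A hA (B + 2 * K) (by positivity)
  refine ⟨D + K, fun γ a b hab hγ ha hb t ht => ?_⟩
  obtain ⟨p, hp, hap⟩ := mem_thickening_iff.1 ha
  obtain ⟨q, hq, hbq⟩ := mem_thickening_iff.1 hb
  set γ' : ℝ → X := fun t => if t = a then p else if t = b then q else γ t with hγ'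
  have hclose : ∀ t, dist (γ t) (γ' t) ≤ K := fun t => by
    simp only [hγ']
    split_ifs with h₁ h₂
    · exact h₁ ▸ hap.le
    · exact h₂ ▸ hbq.le
    · rwa [dist_self]
  have ha' : γ' a ∈ F := by simpa only [hγ', if_true] using hp
  have hb' : γ' b ∈ F := by
    simp only [hγ', if_true]
    split_ifs
    exacts [hp, hq]
  linarith [hD γ' a b hab (hγ.of_dist_le fun t _ => hclose t) ha' hb' t ht, hclose t,
    infDist_le_infDist_add_dist (s := F) (x := γ t) (y := γ' t)]

/- A point on one side at distance `x` from the corner and a point on the other side at distance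
`y` from it are at least `x - B` and at least `y - x` apart, hence at least `(x + y) / 3 - B`. -/
lemma isQuasiGeodesicOn_corner {α β : ℝ → X} {a b B : ℝ} (hα : IsGeodesicOn α 0 a)
    (hβ : IsGeodesicOn β 0 b) (h₀ : α 0 = β 0) (hB : 0 ≤ B)
    (hfoot : ∀ t ∈ Icc 0 b, a - B ≤ dist (α a) (β t)) :
    IsQuasiGeodesicOn 3 B (fun t => if t ≤ 0 then α (-t) else β t) (-a) b := by
  set γ : ℝ → X := fun t => if t ≤ 0 then α (-t) else β t
  have hneg : ∀ t ≤ 0, γ t = α (-t) := fun t ht => if_pos ht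
  have hpos : ∀ t, 0 < t → γ t = β t := fun t ht => if_neg ht.not_ge
  suffices h : ∀ s ∈ Icc (-a) b, ∀ t ∈ Icc (-a) b, s ≤ t →
      (t - s) / 3 - B ≤ dist (γ s) (γ t) ∧ dist (γ s) (γ t) ≤ t - s by
    intro s hs t ht
    rcases le_total s t with hst | hst
    · have := h s hs t ht hst
      rw [abs_of_nonpos (by linarith)]
      constructor <;> linarith
    · have := h t ht s hs hst
      rw [dist_comm, abs_of_nonneg (by linarith)]
      constructor <;> linarith
  intro s hs t ht hst
  rcases le_or_gt t 0 with ht₀ | ht₀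
  · rw [hneg t ht₀, hneg s (hst.trans ht₀), hα _ ⟨by linarith, by linarith [hs.1]⟩ _
      ⟨by linarith, by linarith [ht.1]⟩, abs_of_nonneg (by linarith)]
    constructor <;> linarith
  rcases lt_or_ge 0 s with hs₀ | hs₀
  · rw [hpos t ht₀, hpos s hs₀, hβ _ ⟨hs₀.le, hs.2⟩ _ ⟨ht₀.le, ht.2⟩, abs_of_nonpos (by linarith)]
    constructor <;> linarith
  rw [hneg s hs₀, hpos t ht₀]
  have ha : 0 ≤ a := by linarith [hs.1]
  have hs' : -s ∈ Icc 0 a := ⟨by linarith, by linarith [hs.1]⟩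
  have hαs : dist (α (-s)) (α 0) = -s := by
    rw [hα _ hs' 0 ⟨le_rfl, ha⟩, sub_zero, abs_of_nonneg hs'.1]
  have hαa : dist (α a) (α (-s)) = a + s := by
    rw [hα a ⟨ha, le_rfl⟩ _ hs', abs_of_nonneg (by linarith [hs'.2])]
    ring
  have hβt : dist (α 0) (β t) = t := by
    rw [h₀, hβ 0 ⟨le_rfl, ht₀.le.trans ht.2⟩ t ⟨ht₀.le, ht.2⟩, zero_sub, abs_neg, abs_of_pos ht₀]
  constructor <;>
    linarith [hfoot t ⟨ht₀.le, ht.2⟩, dist_triangle (α a) (α (-s)) (β t),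
      dist_triangle_left (α 0) (β t) (α (-s)), dist_triangle (α (-s)) (α 0) (β t)]

variable [CAT0 X]

lemma IsMorse.exists_infDist_le_of_corner (hF : IsMorse F) {B K : ℝ} (hB : 0 ≤ B) (hK : 0 ≤ K) :
    ∃ D, ∀ (p u w : X) (β : ℝ → X), GeodFromTo β p w →
      (∀ t ∈ Icc 0 (dist p w), dist p u - B ≤ dist u (β t)) →
      u ∈ thickening K F → w ∈ thickening K F → infDist p F ≤ D := by
  obtain ⟨D, hD⟩ := hF.exists_infDist_le_of_mem_thickening (A := 3) (by norm_num) hB hK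
  refine ⟨D, fun p u w β ⟨hβ, hβ₀, hβ₁⟩ hfoot hu hw => ?_⟩
  obtain ⟨α, hα, hα₀, hα₁⟩ := CAT0.geodesic p u
  have hγ := isQuasiGeodesicOn_corner hα hβ (hα₀.trans hβ₀.symm) hB (hα₁.symm ▸ hfoot)
  have key := hD _ _ _ (by linarith [dist_nonneg (x := p) (y := u), dist_nonneg (x := p) (y := w)])
    hγ ?_ ?_ 0 ⟨neg_nonpos.2 dist_nonneg, dist_nonneg⟩
  · simpa [hα₀] using key
  · simpa [hα₁] using hu
  · split_ifs with h
    · obtain rfl : p = w := dist_le_zero.1 h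
      simpa [hα₀] using hw
    · rwa [hβ₁]

end Morse

section ConstantDistance

variable {X : Type*} [MetricSpace X] [CAT0 X] {F : Set X} {r : ℝ → X} {c : ℝ}

lemma dist_sub_two_le_dist_geodesic_of_infDist_eq (hr : IsGeodRay r)
    (hc : ∀ t, 0 ≤ t → infDist (r t) F = c) {u w : X} (hu : u ∈ F) (hru : dist (r 0) u ≤ c + 1)
    {L : ℝ} (hL : 0 ≤ L) (hrw : dist (r L) w ≤ c + 1) {β : ℝ → X} (hβ : GeodFromTo β (r 0) w)
    (hlong : 2 * (c + 1) ^ 2 ≤ dist (r 0) w) {t : ℝ} (ht : t ∈ Icc 0 (dist (r 0) w)) :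
    dist (r 0) u - 2 ≤ dist u (β t) := by
  obtain ⟨hβ, hβ₀, hβ₁⟩ := hβ
  set l := dist (r 0) w
  have hl : 0 ≤ l := dist_nonneg
  have hc₁ : 0 < c + 1 := by linarith [hc 0 le_rfl, infDist_nonneg (x := r 0) (s := F)]
  have hl₀ : 0 < l := (by positivity : 0 < 2 * (c + 1) ^ 2).trans_le hlong
  rcases le_total (2 * dist (r 0) u) t with hfar | hnear
  · have hβt : dist (β 0) (β t) = t := by
      rw [hβ 0 ⟨le_rfl, hl⟩ t ht, zero_sub, abs_neg, abs_of_nonneg ht.1]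
    rw [hβ₀] at hβt
    linarith [dist_triangle (r 0) u (β t)]
  · have hτ : ScalesDistOn (L / l) (fun s => r (L / l * s)) (Icc 0 l) := fun s hs s' hs' => by
      have hq : 0 ≤ L / l := by positivity
      rw [hr _ _ (mul_nonneg hq hs.1) (mul_nonneg hq hs'.1), ← mul_sub, abs_mul, abs_of_nonneg hq,
        Real.dist_eq]
    have hfellow := CAT0.mul_dist_le_mul_dist hβ.scalesDistOn hτ (by simp [hβ₀]) ht
    simp only [div_mul_cancel₀ _ hl₀.ne', hβ₁] at hfellow
    have hclose : dist (β t) (r (L / l * t)) ≤ 1 := by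
      refine le_of_mul_le_mul_left (hfellow.trans ?_) hl₀
      calc t * dist w (r L) ≤ 2 * (c + 1) * (c + 1) := by
            rw [dist_comm w]
            gcongr
            linarith
        _ ≤ l * 1 := by linarith
    linarith [hc _ (mul_nonneg (div_nonneg hL hl) ht.1), dist_comm u (β t),
      infDist_le_dist_of_mem (x := r (L / l * t)) hu, dist_triangle_left (r (L / l * t)) u (β t)]

lemma IsMorse.exists_le_of_infDist_eq (hF : IsMorse F) (hne : F.Nonempty) :
    ∃ D, ∀ (r : ℝ → X) (c : ℝ), IsGeodRay r → (∀ t, 0 ≤ t → infDist (r t) F = c) → c ≤ D := by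
  obtain ⟨D, hD⟩ := hF.exists_infDist_le_of_corner zero_le_two zero_le_one
  refine ⟨D, fun r c hr hc => ?_⟩
  have hc₀ : 0 ≤ c := hc 0 le_rfl ▸ infDist_nonneg
  obtain ⟨u, hu, hru⟩ := (infDist_lt_iff hne).1 ((hc 0 le_rfl).trans_lt (lt_add_one c))
  set L := 2 * (c + 1) ^ 2 + (c + 1)
  have hL : 0 ≤ L := by positivity
  obtain ⟨w, hw, hrw⟩ := (infDist_lt_iff hne).1 ((hc L hL).trans_lt (lt_add_one c))
  have hlong : 2 * (c + 1) ^ 2 ≤ dist (r 0) w := by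
    have hrL : dist (r 0) (r L) = L := by
      rw [hr 0 L le_rfl hL, zero_sub, abs_neg, abs_of_nonneg hL]
    linarith [dist_triangle_right (r 0) (r L) w]
  obtain ⟨β, hβ⟩ := CAT0.geodesic (r 0) w
  rw [← hc 0 le_rfl]
  exact hD (r 0) u w β hβ (fun t ht => dist_sub_two_le_dist_geodesic_of_infDist_eq hr hc hu hru.le
    hL hrw.le hβ hlong ht) (self_subset_thickening one_pos F hu)
    (self_subset_thickening one_pos F hw)

end ConstantDistance

section ObtuseAngle

variable {E : Type*} [NormedAddCommGroup E] [InnerProductSpace ℝ E]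

lemma dist_le_dist_lineMap_of_inner_nonpos {u w y : E} (h : inner ℝ (u - y) (w - y) ≤ 0) {s : ℝ}
    (hs : 0 ≤ s) : dist u y ≤ dist u (AffineMap.lineMap y w s) := by
  have hsub : u - AffineMap.lineMap y w s = (u - y) - s • (w - y) := by
    rw [AffineMap.lineMap_apply_module']
    abel
  rw [dist_eq_norm, dist_eq_norm, hsub, ← sq_le_sq₀ (norm_nonneg _) (norm_nonneg _),
    norm_sub_sq_real (u - y), inner_smul_right]
  linarith [mul_nonpos_of_nonneg_of_nonpos hs h, sq_nonneg ‖s • (w - y)‖]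

lemma geodFromTo_lineMap {X : Type*} [MetricSpace X] {ψ : E → X} (hψ : Isometry ψ) (y w : E) :
    GeodFromTo (fun t => ψ (AffineMap.lineMap y w (t / dist y w))) (ψ y) (ψ w) := by
  rw [GeodFromTo, hψ.dist_eq]
  rcases eq_or_ne y w with rfl | hne
  · simp [IsGeodesicOn]
  have hpos := dist_pos.2 hne
  refine ⟨fun s _ t _ => ?_, by simp, by simp [hpos.ne']⟩
  rw [hψ.dist_eq, dist_lineMap_lineMap, Real.dist_eq, ← sub_div, abs_div, abs_of_pos hpos,
    div_mul_cancel₀ _ hpos.ne']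

lemma IsMorse.exists_infDist_le_of_inner_nonpos {X : Type*} [MetricSpace X] [CAT0 X] {F : Set X}
    (hF : IsMorse F) {K : ℝ} (hK : 0 ≤ K) :
    ∃ D, ∀ (ψ : E → X) (u w y : E), Isometry ψ → ψ u ∈ thickening K F → ψ w ∈ thickening K F →
      inner ℝ (u - y) (w - y) ≤ 0 → infDist (ψ y) F ≤ D := by
  obtain ⟨D, hD⟩ := hF.exists_infDist_le_of_corner le_rfl hK
  refine ⟨D, fun ψ u w y hψ hu hw hinner => hD (ψ y) (ψ u) (ψ w) _ (geodFromTo_lineMap hψ y w)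
    (fun t ht => ?_) hu hw⟩
  rw [sub_zero, hψ.dist_eq, hψ.dist_eq, dist_comm y u]
  exact dist_le_dist_lineMap_of_inner_nonpos hinner (div_nonneg ht.1 dist_nonneg)

lemma inner_nonpos_of_norm_le {u w y : E} {a b C : ℝ} (hua : ‖u - y‖ ≤ a + C)
    (hwb : ‖w - y‖ ≤ b + C) (huw : b + a / 3 - C ≤ ‖u - w‖) (hab : 9 * a ≤ b)
    (hCa : 100 * C ≤ a) : inner ℝ (u - y) (w - y) ≤ 0 := by
  have haC : 0 ≤ a + C := (norm_nonneg _).trans hua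
  have ha : 0 ≤ a := by linarith
  have hsq := norm_sub_sq_real (u - y) (w - y)
  rw [sub_sub_sub_cancel_right] at hsq
  have hu_sq : ‖u - y‖ ^ 2 ≤ (a + C) ^ 2 := by gcongr
  have hw_sq : ‖w - y‖ ^ 2 ≤ (b + C) ^ 2 := by gcongr
  have huw_sq : (b + a / 3 - C) ^ 2 ≤ ‖u - w‖ ^ 2 := by
    gcongr
    linarith
  nlinarith [mul_nonneg haC (sub_nonneg.2 hCa), mul_nonneg ha (sub_nonneg.2 hab),
    mul_nonneg (sub_nonneg.2 hab) (sub_nonneg.2 hCa), mul_nonneg ha (sub_nonneg.2 hCa)]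

end ObtuseAngle

section FarPairs

variable {E : Type*} [NormedAddCommGroup E]

lemma norm_sub_add_half_norm_le [NormedSpace ℝ E] {z z' : E} (hle : ‖z‖ ≤ ‖z'‖)
    (hdir : ‖‖z'‖⁻¹ • z' - ‖z‖⁻¹ • z‖ ≤ 1 / 2) : ‖z' - z‖ + ‖z‖ / 2 ≤ ‖z'‖ := by
  rcases eq_or_ne z 0 with rfl | hz
  · simp
  have hz₀ : ‖z‖ ≠ 0 := norm_ne_zero_iff.2 hz
  have hz'₀ : ‖z'‖ ≠ 0 := ((norm_pos_iff.2 hz).trans_le hle).ne'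
  have hsplit : z' - z = (‖z'‖ - ‖z‖) • ‖z'‖⁻¹ • z' + ‖z‖ • (‖z'‖⁻¹ • z' - ‖z‖⁻¹ • z) := by
    rw [sub_smul, smul_sub, smul_inv_smul₀ hz'₀, smul_inv_smul₀ hz₀]
    abel
  have hnorm : ‖z' - z‖ ≤ (‖z'‖ - ‖z‖) + ‖z‖ * (1 / 2) := by
    rw [hsplit]
    refine (norm_add_le _ _).trans (add_le_add (le_of_eq ?_) ?_)
    · rw [norm_smul, norm_smul, norm_inv, norm_norm, inv_mul_cancel₀ hz'₀, mul_one,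
        Real.norm_of_nonneg (sub_nonneg.2 hle)]
    · rw [norm_smul, norm_norm]
      gcongr
  linarith

lemma exists_norm_sub_add_norm_le [NormedSpace ℝ E] [FiniteDimensional ℝ E] {P : Set E}
    (hP : ¬ Bornology.IsBounded P) (N : ℝ) :
    ∃ z ∈ P, ∃ z' ∈ P, N ≤ ‖z‖ ∧ 10 * ‖z‖ ≤ ‖z' - z‖ ∧ ‖z' - z‖ + ‖z‖ / 2 ≤ ‖z'‖ := by
  have hfar : ∀ n : ℕ, ∃ z ∈ P, max N 0 + n < ‖z‖ := fun n => by
    by_contra! h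
    exact hP (isBounded_iff_forall_norm_le.2 ⟨_, h⟩)
  choose z hzP hz using hfar
  have hpos : ∀ n, 0 < ‖z n‖ := fun n =>
    (add_nonneg (le_max_right N 0) n.cast_nonneg).trans_lt (hz n)
  set dir : ℕ → E := fun n => ‖z n‖⁻¹ • z n
  have hnorm : ∀ n, ‖dir n‖ = 1 := fun n => norm_smul_inv_norm (𝕜 := ℝ) (norm_pos_iff.1 (hpos n))
  obtain ⟨v, -, k, hk, hlim⟩ := (isCompact_sphere (0 : E) 1).tendsto_subseq
    fun n => mem_sphere_zero_iff_norm.2 (hnorm n)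
  obtain ⟨n, hn⟩ := Metric.cauchySeq_iff'.1 hlim.cauchySeq (1 / 2) one_half_pos
  obtain ⟨m, hm⟩ := exists_nat_ge (max (n : ℝ) (11 * ‖z (k n)‖))
  obtain ⟨hnm, hm⟩ := max_le_iff.1 hm
  have hangle : ‖dir (k m) - dir (k n)‖ ≤ 1 / 2 :=
    (dist_eq_norm (dir (k m)) _ ▸ hn m (Nat.cast_le.1 hnm)).le
  have hlarge : 11 * ‖z (k n)‖ ≤ ‖z (k m)‖ := by
    have hkm : (m : ℝ) ≤ k m := Nat.cast_le.2 (hk.id_le m)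
    linarith [hz (k m), le_max_right N 0]
  refine ⟨z (k n), hzP _, z (k m), hzP _, ?_, ?_, ?_⟩
  · linarith [hz (k n), le_max_left N 0, (k n).cast_nonneg (α := ℝ)]
  · linarith [norm_sub_norm_le (z (k m)) (z (k n))]
  · exact norm_sub_add_half_norm_le (by linarith [norm_nonneg (z (k n))]) hangle

variable {X : Type*} [MetricSpace X]

lemma not_isBounded_setOf_exists_dist_lt {V : Type*} [PseudoMetricSpace V] {ψ : V → X}
    (hψ : Isometry ψ) {A : Set X} (hA : ¬ Bornology.IsBounded A) {D : ℝ}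
    (hAψ : A ⊆ thickening D (range ψ)) :
    ¬ Bornology.IsBounded {z | ∃ x ∈ A, dist x (ψ z) < D} := fun hbdd => by
  refine hA ((hψ.lipschitz.isBounded_image hbdd).thickening (δ := D) |>.subset fun x hx => ?_)
  obtain ⟨_, ⟨z, rfl⟩, hz⟩ := mem_thickening_iff.1 (hAψ hx)
  exact mem_thickening_iff.2 ⟨_, mem_image_of_mem _ ⟨x, hx, hz⟩, hz⟩

lemma exists_dist_add_dist_le [NormedSpace ℝ E] [FiniteDimensional ℝ E] {ψ : E → X}
    (hψ : Isometry ψ) {A : Set X} (hA : ¬ Bornology.IsBounded A) {D : ℝ}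
    (hAψ : A ⊆ thickening D (range ψ)) (o : X) (N : ℝ) :
    ∃ x ∈ A, ∃ x' ∈ A,
      N ≤ dist o x ∧ 9 * dist o x ≤ dist x x' ∧ dist x x' + dist o x / 3 ≤ dist o x' := by
  obtain ⟨z, ⟨x, hx, hxz⟩, z', ⟨x', hx', hxz'⟩, hN, hratio, halign⟩ := exists_norm_sub_add_norm_le
    (not_isBounded_setOf_exists_dist_lt hψ hA hAψ) (max N 0 + 100 * (D + dist o (ψ 0)))
  have ho : ∀ {p q}, dist p (ψ q) < D → |dist o p - ‖q‖| ≤ D + dist o (ψ 0) := fun {p q} hpq => by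
    rw [← dist_zero_left, ← hψ.dist_eq]
    exact (dist_dist_dist_le o p (ψ 0) (ψ q)).trans (by linarith)
  have hxx' : |dist x x' - ‖z' - z‖| ≤ 2 * D := by
    rw [← dist_eq_norm', ← hψ.dist_eq]
    exact (dist_dist_dist_le x x' (ψ z) (ψ z')).trans (by linarith)
  obtain ⟨hx₁, hx₂⟩ := abs_le.1 (ho hxz)
  obtain ⟨hx'₁, -⟩ := abs_le.1 (ho hxz')
  obtain ⟨hd₁, hd₂⟩ := abs_le.1 hxx'
  have hD : 0 < D := dist_nonneg.trans_lt hxz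
  have ho₀ : 0 ≤ dist o (ψ 0) := dist_nonneg
  have hN₀ := le_max_right N 0
  refine ⟨x, hx, x', hx', ?_, ?_, ?_⟩ <;> linarith [le_max_left N 0]

end FarPairs

section Orbit

variable {X : Type*} [MetricSpace X] [CAT0 X] {E : Type*} [NormedAddCommGroup E]
  [InnerProductSpace ℝ E] [FiniteDimensional ℝ E]

lemma IsMorse.exists_infDist_le_of_unbounded_orbit {F : Set X} (hF : IsMorse F) {ψ : E → X}
    (hψ : Isometry ψ) {S : Subgroup (X ≃ᵢ X)} {o : X} {D K : ℝ}
    (hSψ : ∀ h ∈ S, h o ∈ thickening D (range ψ)) (hSF : ∀ h ∈ S, h o ∈ thickening K F)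
    (hunb : ¬ Bornology.IsBounded ((fun h : X ≃ᵢ X => h o) '' S)) :
    ∃ C, ∀ y, infDist (ψ y) F ≤ C := by
  have hproj : ∀ h ∈ S, ∃ z, dist (h o) (ψ z) < D ∧ ψ z ∈ thickening (K + D) F := fun h hh => by
    obtain ⟨_, ⟨z, rfl⟩, hz⟩ := mem_thickening_iff.1 (hSψ h hh)
    obtain ⟨p, hp, hhp⟩ := mem_thickening_iff.1 (hSF h hh)
    exact ⟨z, hz, mem_thickening_iff.2 ⟨p, hp, by linarith [dist_triangle_left (ψ z) p (h o)]⟩⟩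
  have hpos : ∀ {r : ℝ} {A : Set X}, (∀ h ∈ S, h o ∈ thickening r A) → 0 < r := fun hS => by
    obtain ⟨p, -, hp⟩ := mem_thickening_iff.1 (hS 1 S.one_mem)
    exact dist_nonneg.trans_lt hp
  have hD : 0 < D := hpos hSψ
  obtain ⟨C, hC⟩ := hF.exists_infDist_le_of_inner_nonpos (E := E)
    (add_pos (hpos hSF) hD).le
  refine ⟨C, fun y => ?_⟩
  set M := D + dist o (ψ y)
  have hM : 0 ≤ M := add_nonneg hD.le dist_nonneg
  -- Seen from `o`, the points `a⁻¹ o` and `(a⁻¹ * b) o` subtend an obtuse angle.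
  obtain ⟨_, ⟨a, ha, rfl⟩, _, ⟨b, hb, rfl⟩, hfar, hratio, halign⟩ := exists_dist_add_dist_le hψ hunb
    (image_subset_iff.2 hSψ) o (100 * (2 * M))
  obtain ⟨u, hu, huF⟩ := hproj a⁻¹ (S.inv_mem ha)
  obtain ⟨w, hw, hwF⟩ := hproj (a⁻¹ * b) (S.mul_mem (S.inv_mem ha) hb)
  refine hC ψ u w y hψ huF hwF (inner_nonpos_of_norm_le ?_ ?_ ?_ hratio hfar)
  · have hinv : dist (a⁻¹ o) o = dist o (a o) := by
      rw [← a.dist_eq, IsometryEquiv.apply_inv_self]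
    rw [← dist_eq_norm, ← hψ.dist_eq]
    linarith [dist_triangle4_left (a⁻¹ o) o (ψ u) (ψ y)]
  · have hinv : dist ((a⁻¹ * b) o) o = dist (a o) (b o) := by
      rw [← a.dist_eq, IsometryEquiv.mul_apply, IsometryEquiv.apply_inv_self, dist_comm]
    rw [← dist_eq_norm, ← hψ.dist_eq]
    linarith [dist_triangle4_left ((a⁻¹ * b) o) o (ψ w) (ψ y)]
  · have hinv : dist (a⁻¹ o) ((a⁻¹ * b) o) = dist o (b o) := by
      rw [IsometryEquiv.mul_apply, a⁻¹.dist_eq]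
    rw [← dist_eq_norm, ← hψ.dist_eq]
    linarith [dist_triangle4_right (a⁻¹ o) ((a⁻¹ * b) o) (ψ u) (ψ w),
      dist_nonneg (x := o) (y := ψ y)]

end Orbit

section BoundaryStabilizer

variable {X : Type*} [MetricSpace X] {F : Set X} {g h : X ≃ᵢ X}

lemma AsympRay.refl (r : ℝ → X) : AsympRay r r :=
  ⟨0, fun t _ => (dist_self (r t)).le⟩

lemma AsympRay.trans {r₁ r₂ r₃ : ℝ → X} (h₁₂ : AsympRay r₁ r₂) (h₂₃ : AsympRay r₂ r₃) :
    AsympRay r₁ r₃ := by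
  obtain ⟨M, hM⟩ := h₁₂
  obtain ⟨N, hN⟩ := h₂₃
  exact ⟨M + N, fun t ht => (dist_triangle _ _ _).trans (add_le_add (hM t ht) (hN t ht))⟩

lemma AsympRay.map {r₁ r₂ : ℝ → X} (h₁₂ : AsympRay r₁ r₂) (g : X ≃ᵢ X) :
    AsympRay (fun t => g (r₁ t)) fun t => g (r₂ t) := by
  simpa only [AsympRay, g.dist_eq] using h₁₂

lemma RayIn.image {r : ℝ → X} (hr : RayIn F r) (g : X ≃ᵢ X) : RayIn (g '' F) fun t => g (r t) :=
  ⟨fun s t hs ht => (g.dist_eq _ _).trans (hr.1 s t hs ht),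
    fun t ht => mem_image_of_mem g (hr.2 t ht)⟩

/-- The isometry `g` maps the boundary sphere `∂F` into itself; `StabBoundary F g` asks this of
`g` and of `g⁻¹`. -/
def MapsBoundary (F : Set X) (g : X ≃ᵢ X) : Prop :=
  ∀ r, RayIn F r → ∃ r', RayIn F r' ∧ AsympRay (fun t => g (r t)) r'

lemma stabBoundary_iff : StabBoundary F g ↔ MapsBoundary F g ∧ MapsBoundary F g⁻¹ :=
  Iff.rfl

lemma MapsBoundary.mul (hg : MapsBoundary F g) (hh : MapsBoundary F h) :
    MapsBoundary F (g * h) := fun r hr => by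
  obtain ⟨r', hr', hrr'⟩ := hh r hr
  obtain ⟨r'', hr'', hrr''⟩ := hg r' hr'
  exact ⟨r'', hr'', (hrr'.map g).trans hrr''⟩

lemma MapsBoundary.image_of_conj (h_conj : MapsBoundary F (g⁻¹ * h * g)) :
    MapsBoundary (g '' F) h := fun r hr => by
  have hr₀ : RayIn F fun t => g⁻¹ (r t) := by
    have := hr.image g⁻¹
    rwa [image_image, image_congr fun x _ => g.inv_apply_self x, image_id'] at this
  obtain ⟨r', hr', hrr'⟩ := h_conj _ hr₀
  refine ⟨_, hr'.image g, ?_⟩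
  simpa only [IsometryEquiv.mul_apply, IsometryEquiv.apply_inv_self] using hrr'.map g

lemma StabBoundary.mul (hg : StabBoundary F g) (hh : StabBoundary F h) :
    StabBoundary F (g * h) := by
  obtain ⟨hg, hg_inv⟩ := stabBoundary_iff.1 hg
  obtain ⟨hh, hh_inv⟩ := stabBoundary_iff.1 hh
  refine stabBoundary_iff.2 ⟨hg.mul hh, ?_⟩
  rw [mul_inv_rev]
  exact hh_inv.mul hg_inv

/-- The stabilizer of the boundary sphere `∂F` in the full isometry group; the group `Γ₀` of the
proposition is its intersection with `Γ`. -/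
def boundaryStabilizer (F : Set X) : Subgroup (X ≃ᵢ X) where
  carrier := {g | StabBoundary F g}
  one_mem' := ⟨fun r hr => ⟨r, hr, .refl r⟩, fun r hr => ⟨r, hr, .refl r⟩⟩
  mul_mem' {_ _} hg hh := hg.mul hh
  inv_mem' hg := ⟨hg.2, hg.1⟩

lemma StabBoundary.image_of_conj (h_conj : StabBoundary F (g⁻¹ * h * g)) :
    StabBoundary (g '' F) h := by
  obtain ⟨hmaps, hmaps_inv⟩ := stabBoundary_iff.1 h_conj
  exact stabBoundary_iff.2 ⟨hmaps.image_of_conj, MapsBoundary.image_of_conj (by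
    simpa only [mul_inv_rev, inv_inv, mul_assoc] using hmaps_inv)⟩

lemma infDist_image_isometryEquiv (g : X ≃ᵢ X) (x : X) :
    infDist x (g '' F) = infDist (g⁻¹ x) F := by
  conv_lhs => rw [← g.apply_inv_self x]
  exact infDist_image g.isometry

lemma IsMorse.image (hF : IsMorse F) (g : X ≃ᵢ X) : IsMorse (g '' F) := fun A hA B hB => by
  obtain ⟨D, hD, hbound⟩ := hF A hA B hB
  refine ⟨D, hD, fun γ a b hab hγ ha hb t ht => ?_⟩
  have hmem : ∀ {s}, γ s ∈ g '' F → g⁻¹ (γ s) ∈ F := by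
    rintro s ⟨x, hx, hxs⟩
    rwa [← hxs, g.inv_apply_self]
  rw [infDist_image_isometryEquiv]
  exact hbound (fun s => g⁻¹ (γ s)) a b hab
    (fun s hs t ht => by simpa only [g⁻¹.dist_eq] using hγ s hs t ht) (hmem ha) (hmem hb) t ht

end BoundaryStabilizer

section BoundaryStabilizerOfFlat

variable {X : Type*} [MetricSpace X] {E : Type*} [NormedAddCommGroup E]
  [NormedSpace ℝ E] {φ : E → X} {h : X ≃ᵢ X}

lemma MapsBoundary.exists_infDist_le (hφ : Isometry φ) (hh : MapsBoundary (range φ) h) (x v : E) :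
    ∃ M, ∀ t : ℝ, 0 ≤ t → infDist (h (φ (x + t • v))) (range φ) ≤ M := by
  rcases eq_or_ne v 0 with rfl | hv
  · exact ⟨_, fun t _ => by rw [smul_zero]⟩
  obtain ⟨r, hr, M, hM⟩ := hh _ (rayIn_range_of_norm_eq_one hφ x (norm_smul_inv_norm (𝕜 := ℝ) hv))
  refine ⟨M, fun t ht => ?_⟩
  have hs : 0 ≤ t * ‖v‖ := by positivity
  refine (infDist_le_dist_of_mem (hr.2 _ hs)).trans ?_
  simpa [smul_smul, mul_assoc, norm_ne_zero_iff.2 hv] using hM _ hs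

variable [CAT0 X]

lemma mapsBoundary_of_infDist_le [CompleteSpace E] (hφ : Isometry φ) {C : ℝ}
    (hC : ∀ x, infDist (h (φ x)) (range φ) ≤ C) : MapsBoundary (range φ) h := fun r hr =>
  exists_rayIn_asympRay_of_infDist_le hφ
    (fun s t hs ht => (h.dist_eq _ _).trans (hr.1 s t hs ht)) fun t ht => by
      obtain ⟨x, hx⟩ := hr.2 t ht
      exact hx ▸ hC x

lemma MapsBoundary.infDist_eq (hφ : Isometry φ) (hh : MapsBoundary (range φ) h) (x y : E) :
    infDist (h (φ x)) (range φ) = infDist (h (φ y)) (range φ) :=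
  eq_of_convexOn_univ_of_bounded_rays (CAT0.convexOn_infDist convex_univ
    (scalesDistOn_of_isometry (h.isometry.comp hφ) univ) (range_nonempty φ)
    (exists_isMetricMidpoint_mem_range hφ)) (hh.exists_infDist_le hφ) x y

lemma IsMorse.exists_infDist_le_of_mapsBoundary [Nontrivial E] (hφ : Isometry φ)
    (hM : IsMorse (range φ)) :
    ∃ D, ∀ h, MapsBoundary (range φ) h → ∀ x, infDist (h (φ x)) (range φ) ≤ D := by
  obtain ⟨D, hD⟩ := hM.exists_le_of_infDist_eq (range_nonempty φ)
  obtain ⟨e, he⟩ := exists_norm_eq E zero_le_one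
  exact ⟨D, fun h hh x => hD _ _ (rayIn_range_of_norm_eq_one (h.isometry.comp hφ) x he).1
    fun t _ => hh.infDist_eq hφ _ _⟩

end BoundaryStabilizerOfFlat

section AlmostMalnormal

variable {X : Type*} [MetricSpace X]

lemma IsDiscreteSubgroup.not_isBounded_orbit {Γ : Subgroup (X ≃ᵢ X)} (hΓ : IsDiscreteSubgroup Γ)
    {S : Set (X ≃ᵢ X)} (hSΓ : S ⊆ Γ) (hS : S.Infinite) (o : X) :
    ¬ Bornology.IsBounded ((fun h : X ≃ᵢ X => h o) '' S) := fun hbdd => by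
  obtain ⟨R, hR⟩ := hbdd.subset_closedBall o
  refine hS (((hΓ o R).image Subtype.val).subset fun h hh => ?_)
  exact ⟨⟨h, hSΓ hh⟩, hR (mem_image_of_mem _ hh), rfl⟩

variable [CAT0 X]

lemma exists_infDist_le_of_infinite_inf_boundaryStabilizer {E : Type*} [NormedAddCommGroup E]
    [InnerProductSpace ℝ E] [FiniteDimensional ℝ E] {Γ : Subgroup (X ≃ᵢ X)}
    (hΓ : IsDiscreteSubgroup Γ) {φ ψ : E → X} (hφ : Isometry φ) (hψ : Isometry ψ)
    (hMφ : IsMorse (range φ)) (hMψ : IsMorse (range ψ))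
    (hinf : ((Γ ⊓ (boundaryStabilizer (range φ) ⊓ boundaryStabilizer (range ψ)) :
      Subgroup (X ≃ᵢ X)) : Set (X ≃ᵢ X)).Infinite) :
    ∃ C, ∀ y, infDist (ψ y) (range φ) ≤ C := by
  rcases subsingleton_or_nontrivial E with hE | hE
  · exact ⟨_, fun y => (congrArg (fun z => infDist (ψ z) (range φ)) (Subsingleton.elim y 0)).le⟩
  obtain ⟨K, hK⟩ := hMφ.exists_infDist_le_of_mapsBoundary hφ
  obtain ⟨D, hD⟩ := hMψ.exists_infDist_le_of_mapsBoundary hψ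
  have hnear : ∀ h : X ≃ᵢ X, StabBoundary (range φ) h →
      infDist (h (ψ 0)) (range φ) < K + dist (ψ 0) (φ 0) + 1 := fun h hh => by
    have := infDist_le_infDist_add_dist (s := range φ) (x := h (ψ 0)) (y := h (φ 0))
    rw [h.dist_eq] at this
    linarith [hK h (stabBoundary_iff.1 hh).1 0]
  refine hMφ.exists_infDist_le_of_unbounded_orbit (D := D + 1) (K := K + dist (ψ 0) (φ 0) + 1) hψ
    (fun h hh => ?_) (fun h hh => ?_) (hΓ.not_isBounded_orbit (fun _ hh => hh.1) hinf (ψ 0))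
  · rw [mem_thickening_iff_infDist_lt (range_nonempty ψ)]
    linarith [hD h (stabBoundary_iff.1 hh.2.2).1 0]
  · exact (mem_thickening_iff_infDist_lt (range_nonempty φ)).2 (hnear h hh.2.1)

theorem stab_boundary_almost_malnormal_general {Γ : Subgroup (X ≃ᵢ X)}
    (hΓ : IsDiscreteSubgroup Γ) {d : ℕ} {F : Set X} (hF : IsFlat d F) (hM : IsMorse F)
    {g : X ≃ᵢ X} (hg : ¬ StabBoundary F g) :
    {h | h ∈ Γ ∧ StabBoundary F h ∧ StabBoundary F (g⁻¹ * h * g)}.Finite := by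
  obtain ⟨φ, hφ, rfl⟩ := hF
  have hgφ : Isometry (g ∘ φ) := g.isometry.comp hφ
  have hMg : IsMorse (range (g ∘ φ)) := range_comp g φ ▸ hM.image g
  by_contra hinf
  have hinf : ((Γ ⊓ (boundaryStabilizer (range φ) ⊓ boundaryStabilizer (range (g ∘ φ))) :
      Subgroup (X ≃ᵢ X)) : Set (X ≃ᵢ X)).Infinite := Set.Infinite.mono
    (fun h hh => ⟨hh.1, hh.2.1, range_comp g φ ▸ hh.2.2.image_of_conj⟩) hinf
  obtain ⟨C, hC⟩ := exists_infDist_le_of_infinite_inf_boundaryStabilizer hΓ hφ hgφ hM hMg hinf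
  rw [inf_comm (boundaryStabilizer (range φ))] at hinf
  obtain ⟨C', hC'⟩ := exists_infDist_le_of_infinite_inf_boundaryStabilizer hΓ hgφ hφ hMg hM hinf
  refine hg (stabBoundary_iff.2 ⟨mapsBoundary_of_infDist_le hφ hC,
    mapsBoundary_of_infDist_le hφ (C := C') fun x => ?_⟩)
  rw [← infDist_image_isometryEquiv, ← range_comp]
  exact hC' x

end AlmostMalnormal

/-- Proposition 8.1(4): let `X` be a proper CAT(0) space, `Γ` a discrete group of
isometries, `F` a `Γ`-periodic Morse `d`-flat, and `Γ₀ = Stab_Γ(∂F)`.  Then `Γ₀` is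
almost malnormal in `Γ`: for every `g ∈ Γ ∖ Γ₀`, the set `Γ₀ ∩ g Γ₀ g⁻¹` is finite. -/
theorem stab_boundary_almost_malnormal
    {X : Type*} [MetricSpace X] [ProperSpace X] [CAT0 X]
    (Γ : Subgroup (X ≃ᵢ X)) (hdisc : IsDiscreteSubgroup Γ)
    (d : ℕ) (hd : 1 ≤ d) (F : Set X) (hF : IsFlat d F) (hMorse : IsMorse F)
    (o : X) (ho : o ∈ F) (R : ℝ)
    (hperiodic : ∀ x ∈ F, ∃ g ∈ Γ, (g : X ≃ᵢ X) '' F = F ∧ dist x ((g : X ≃ᵢ X) o) ≤ R) :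
    ∀ g ∈ Γ, ¬ StabBoundary F g →
      {h : X ≃ᵢ X | h ∈ Γ ∧ StabBoundary F h ∧
        g⁻¹ * h * g ∈ Γ ∧ StabBoundary F (g⁻¹ * h * g)}.Finite := by
  intro g _ hg
  exact (stab_boundary_almost_malnormal_general hdisc hF hMorse hg).subset
    fun h hh => ⟨hh.1, hh.2.1, hh.2.2.2⟩
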